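/- arXiv:2212.06802 — 2 statements merged into one kernel-verified Lean document; each statement's English description precedes it below -/
import Mathlib

section
/- For every real δ > 0 there exists a constant c > 0 such that for all integers r > s ≥ 1 and every integer k with (k − 1)·(r − s) ≥ (1 + δ)·r, one has R_{r,s}(k) ≥ exp(c·(r − s)). -/
/-- `HasSetColouringRamsey r s k n` says that every colouring assigning to each
edge of the complete graph on `n` vertices a set of `s` colours from `{1,…,r}`
contains a monochromatic clique of size `k`. -/
def HasSetColouringRamsey (r s k n : ℕ) : Prop :=
  ∀ χ : Fin n → Fin n → Finset (Fin r),
    (∀ u v, χ u v = χ v u) →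
    (∀ u v, u ≠ v → (χ u v).card = s) →
    ∃ (S : Finset (Fin n)) (i : Fin r), S.card = k ∧
      ∀ u ∈ S, ∀ v ∈ S, u ≠ v → i ∈ χ u v

/-- The set-colouring Ramsey number `R_{r,s}(k)`. -/
noncomputable def setRamsey (r s k : ℕ) : ℕ :=
  sInf {n | HasSetColouringRamsey r s k n}

/-!
If every pair of words in a code of length `r` over `k - 1` symbols has Hamming distance at least
`s`, colour the edge `uv` with `s` coordinates in which the words `u` and `v` differ. The words of
a monochromatic clique in colour `i` then have distinct `i`-th symbols, so the clique has fewer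
than `k` vertices and `R_{r,s}(k)` exceeds the size of the code. The Hamming balls of radius `s - 1`
around the words of a maximal code cover all `(k - 1) ^ r` words (Gilbert–Varshamov), and each of
them is an exponentially small part of the space by a Chernoff bound: two random words agree in
`r / (k - 1)` places on average, while a word of the ball agrees with the centre in more than
`r - s ≥ (1 + δ) r / (k - 1)` places.
-/

open Finset

section Ramsey

variable {κ α : Type*} [Fintype κ] [Nonempty κ]

theorem exists_adj_of_card_mul_lt_card (G : κ → SimpleGraph α) (V : Finset α)
    (hG : (V : Set α).Pairwise fun u v => ∃ i, (G i).Adj u v) {n : ℕ}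
    (hn : Fintype.card κ * n < #V) :
    ∃ v ∈ V, ∃ i, ∃ W ⊆ V, (∀ u ∈ W, (G i).Adj v u) ∧ n ≤ #W := by
  classical
  obtain ⟨v, hv⟩ : V.Nonempty := card_pos.1 (Nat.zero_lt_of_lt hn)
  have hadj : ∀ u ∈ V.erase v, ∃ i, (G i).Adj v u := fun u hu =>
    hG hv (mem_of_mem_erase hu) (ne_of_mem_erase hu).symm
  choose! colour hcolour using hadj
  have hcard : #(univ : Finset κ) * n ≤ #(V.erase v) := by
    rw [card_univ, card_erase_of_mem hv]
    exact Nat.le_pred_of_lt hn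
  obtain ⟨i, -, hi⟩ := exists_le_card_fiber_of_mul_le_card_of_maps_to
    (fun u _ => mem_univ (colour u)) univ_nonempty hcard
  refine ⟨v, hv, i, {u ∈ V.erase v | colour u = i},
    (filter_subset _ _).trans (erase_subset _ _), fun u hu => ?_, hi⟩
  obtain ⟨huV, rfl⟩ := mem_filter.1 hu
  exact hcolour u huV

theorem exists_isNClique_of_pow_le_card (k : κ → ℕ) (G : κ → SimpleGraph α) (V : Finset α)
    (hG : (V : Set α).Pairwise fun u v => ∃ i, (G i).Adj u v)
    (hV : (Fintype.card κ + 1) ^ (∑ i, k i) ≤ #V) :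
    ∃ i, ∃ S ⊆ V, (G i).IsNClique (k i) S := by
  classical
  induction ht : ∑ i, k i generalizing k V with
  | zero =>
    obtain ⟨i⟩ := ‹Nonempty κ›
    have hki : k i = 0 := sum_eq_zero_iff.1 ht i (mem_univ i)
    exact ⟨i, ∅, empty_subset V, by simp [hki]⟩
  | succ t ih =>
    by_cases hzero : ∃ i, k i = 0
    · obtain ⟨i, hi⟩ := hzero
      exact ⟨i, ∅, empty_subset V, by simp [hi]⟩
    push Not at hzero
    have hlt : Fintype.card κ * (Fintype.card κ + 1) ^ t < #V := by
      have hpow : 0 < (Fintype.card κ + 1) ^ t := by positivity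
      rw [ht, pow_succ'] at hV
      lia
    obtain ⟨v, hv, i, W, hWV, hvW, hW⟩ := exists_adj_of_card_mul_lt_card G V hG hlt
    have hle : Pi.single i 1 ≤ k := fun j => by
      obtain rfl | hji := eq_or_ne j i
      · simpa using Nat.one_le_iff_ne_zero.2 (hzero j)
      · simp [hji]
    have hk : k - Pi.single i 1 + Pi.single i 1 = k := tsub_add_cancel_of_le hle
    have hsum : ∑ j, (k - Pi.single i 1 : κ → ℕ) j = t := by
      have := congrArg (fun l : κ → ℕ => ∑ j, l j) hk
      simpa [sum_add_distrib, ht] using this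
    obtain ⟨j, S, hSW, hS⟩ := ih (k - Pi.single i 1) W (hG.mono (mod_cast hWV)) (by rwa [hsum]) hsum
    obtain rfl | hji := eq_or_ne j i
    · refine ⟨j, insert v S, insert_subset hv (hSW.trans hWV), ?_⟩
      rw [← Nat.sub_add_cancel (Nat.one_le_iff_ne_zero.2 (hzero j))]
      exact SimpleGraph.IsNClique.insert (by simpa using hS) fun u hu => hvW u (hSW hu)
    · exact ⟨j, S, hSW.trans hWV, by simpa [hji] using hS⟩

end Ramsey

section SetColouring

variable {r s k : ℕ}

theorem hasSetColouringRamsey_pow (hr : r ≠ 0) (hs : s ≠ 0) (k : ℕ) :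
    HasSetColouringRamsey r s k ((r + 1) ^ (r * k)) := by
  intro χ hsymm hcard
  have : NeZero r := ⟨hr⟩
  let G (i : Fin r) : SimpleGraph (Fin ((r + 1) ^ (r * k))) :=
    { Adj u v := u ≠ v ∧ i ∈ χ u v
      symm := ⟨fun u v h => ⟨h.1.symm, hsymm u v ▸ h.2⟩⟩
      loopless := ⟨fun _ h => h.1 rfl⟩ }
  have hG (u v : Fin ((r + 1) ^ (r * k))) (huv : u ≠ v) : ∃ i, (G i).Adj u v := by
    obtain ⟨i, hi⟩ : (χ u v).Nonempty := card_ne_zero.1 (hcard u v huv ▸ hs)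
    exact ⟨i, huv, hi⟩
  obtain ⟨i, S, -, hS⟩ := exists_isNClique_of_pow_le_card (fun _ => k) G univ
    (fun u _ v _ huv => hG u v huv) (by simp)
  exact ⟨S, i, hS.card_eq, fun u hu v hv huv => (hS.isClique hu hv huv).2⟩

theorem hasSetColouringRamsey_setRamsey (hr : r ≠ 0) (hs : s ≠ 0) (k : ℕ) :
    HasSetColouringRamsey r s k (setRamsey r s k) :=
  Nat.sInf_mem (s := {n | HasSetColouringRamsey r s k n}) ⟨_, hasSetColouringRamsey_pow hr hs k⟩

variable {α : Fin r → Type*} [∀ i, Fintype (α i)] [∀ i, DecidableEq (α i)]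

theorem not_hasSetColouringRamsey_of_le_hammingDist {n : ℕ} (x : Fin n → ∀ i, α i)
    (hx : Pairwise fun u v => s ≤ hammingDist (x u) (x v)) (hα : ∀ i, Fintype.card (α i) < k) :
    ¬ HasSetColouringRamsey r s k n := by
  intro H
  choose! subsetOfCard hsubset hcard using
    fun (D : Finset (Fin r)) (hD : s ≤ #D) => exists_subset_card_eq hD
  obtain ⟨S, i, hS, hmono⟩ := H (fun u v => subsetOfCard {i | x u i ≠ x v i})
    (fun u v => by simp only [ne_comm]) (fun u v huv => hcard _ (hx huv))
  have hinj : Set.InjOn (fun u => x u i) S := by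
    intro u hu v hv heq
    by_contra huv
    exact (mem_filter.1 (hsubset _ (hx huv) (hmono u hu v hv huv))).2 heq
  have hle : #S ≤ Fintype.card (α i) := card_le_card_of_injOn _ (fun _ _ => mem_univ _) hinj
  exact (hle.trans_lt (hα i)).ne hS

theorem card_lt_setRamsey_of_le_hammingDist (hr : r ≠ 0) (hs : s ≠ 0) {C : Finset (∀ i, α i)}
    (hC : (C : Set (∀ i, α i)).Pairwise fun x y => s ≤ hammingDist x y)
    (hα : ∀ i, Fintype.card (α i) < k) : #C < setRamsey r s k := by
  by_contra! hle
  let word : Fin (setRamsey r s k) ↪ C := (Fin.castLEEmb hle).trans C.equivFin.symm.toEmbedding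
  refine not_hasSetColouringRamsey_of_le_hammingDist (fun u => (word u : ∀ i, α i)) ?_ hα
    (hasSetColouringRamsey_setRamsey hr hs k)
  intro u v huv
  exact hC (word u).2 (word v).2 (Subtype.coe_injective.ne (word.injective.ne huv))

end SetColouring

theorem exists_pairwise_not_and_card_le_sum_card_filter {α : Type*} [Fintype α]
    (R : α → α → Prop) [DecidableRel R] [Std.Refl R] [Std.Symm R] :
    ∃ C : Finset α, (C : Set α).Pairwise (fun x y => ¬ R x y) ∧
      Fintype.card α ≤ ∑ x ∈ C, #{y | R x y} := by
  classical
  obtain ⟨C, hC⟩ := Set.Finite.exists_maximal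
    (s := {C : Finset α | (C : Set α).Pairwise fun x y => ¬ R x y}) (Set.toFinite _)
    ⟨∅, by simp⟩
  refine ⟨C, hC.prop, ?_⟩
  have hcover : univ ⊆ C.biUnion fun x => {y | R x y} := by
    intro y _
    simp only [mem_biUnion, mem_filter, mem_univ, true_and]
    by_contra! hy
    have hinsert : ((insert y C : Finset α) : Set α).Pairwise fun x z => ¬ R x z := by
      rw [coe_insert]
      exact hC.prop.insert fun x hx _ => ⟨fun h => hy x hx (symm_of R h), hy x hx⟩
    have hyC : y ∈ C := hC.le_of_ge hinsert (subset_insert y C) (mem_insert_self y C)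
    exact hy y hyC (refl_of R y)
  exact (card_le_card hcover).trans card_biUnion_le

section HammingBall

variable {ι R : Type*} [Fintype ι] {α : ι → Type*} [∀ i, Fintype (α i)]
  [∀ i, DecidableEq (α i)]

theorem sum_pow_hammingDist [DecidableEq ι] [CommRing R] (x : ∀ i, α i) (z : R) :
    ∑ y, z ^ hammingDist x y = ∏ i, (1 + ((Fintype.card (α i) : R) - 1) * z) := by
  have hpow (y : ∀ i, α i) : z ^ hammingDist x y = ∏ i, if x i = y i then 1 else z := by
    rw [hammingDist, ← prod_const, prod_filter]
    exact prod_congr rfl fun i _ => by simp only [ne_eq, ite_not]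
  have hcoord (i : ι) :
      ∑ a, (if x i = a then 1 else z) = 1 + ((Fintype.card (α i) : R) - 1) * z :=
    calc ∑ a, (if x i = a then 1 else z)
        = ∑ a, (z + if x i = a then 1 - z else 0) := by
          refine sum_congr rfl fun a _ => ?_
          split_ifs <;> ring
      _ = Fintype.card (α i) * z + (1 - z) := by simp [sum_add_distrib]
      _ = 1 + ((Fintype.card (α i) : R) - 1) * z := by ring
  simp_rw [hpow, ← hcoord, Fintype.prod_sum]

variable [CommRing R] [LinearOrder R] [IsStrictOrderedRing R] {z : R}

theorem card_hammingDist_lt_mul_pow_le [DecidableEq ι] (hz₀ : 0 ≤ z) (hz₁ : z ≤ 1)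
    (x : ∀ i, α i) (d : ℕ) :
    (#{y | hammingDist x y < d} : R) * z ^ d ≤ ∏ i, (1 + ((Fintype.card (α i) : R) - 1) * z) :=
  calc (#{y | hammingDist x y < d} : R) * z ^ d
      = ∑ y with hammingDist x y < d, z ^ d := by rw [sum_const, nsmul_eq_mul]
    _ ≤ ∑ y with hammingDist x y < d, z ^ hammingDist x y :=
      sum_le_sum fun y hy => pow_le_pow_of_le_one hz₀ hz₁ (mem_filter.1 hy).2.le
    _ ≤ ∑ y, z ^ hammingDist x y :=
      sum_le_sum_of_subset_of_nonneg (subset_univ _) fun _ _ _ => pow_nonneg hz₀ _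
    _ = ∏ i, (1 + ((Fintype.card (α i) : R) - 1) * z) := sum_pow_hammingDist x z

theorem exists_code_prod_card_mul_pow_le (hz₀ : 0 ≤ z) (hz₁ : z ≤ 1) {d : ℕ} (hd : d ≠ 0) :
    ∃ C : Finset (∀ i, α i), (C : Set (∀ i, α i)).Pairwise (fun x y => d ≤ hammingDist x y) ∧
      (∏ i, (Fintype.card (α i) : R)) * z ^ d ≤
        #C * ∏ i, (1 + ((Fintype.card (α i) : R) - 1) * z) := by
  classical
  let near (x y : ∀ i, α i) : Prop := hammingDist x y < d
  have : Std.Refl near := ⟨fun x => by simpa [near] using Nat.pos_of_ne_zero hd⟩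
  have : Std.Symm near := ⟨fun x y h => by simpa only [near, hammingDist_comm] using h⟩
  obtain ⟨C, hC, hcard⟩ := exists_pairwise_not_and_card_le_sum_card_filter near
  refine ⟨C, hC.imp fun x y h => not_lt.1 h, ?_⟩
  rw [Fintype.card_pi] at hcard
  calc (∏ i, (Fintype.card (α i) : R)) * z ^ d
      ≤ (∑ x ∈ C, (#{y | near x y} : R)) * z ^ d :=
        mul_le_mul_of_nonneg_right (mod_cast hcard) (pow_nonneg hz₀ d)
    _ = ∑ x ∈ C, (#{y | near x y} : R) * z ^ d := sum_mul ..
    _ ≤ ∑ x ∈ C, ∏ i, (1 + ((Fintype.card (α i) : R) - 1) * z) :=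
        sum_le_sum fun x _ => card_hammingDist_lt_mul_pow_le hz₀ hz₁ x d
    _ = #C * ∏ i, (1 + ((Fintype.card (α i) : R) - 1) * z) := by rw [sum_const, nsmul_eq_mul]

end HammingBall

/-- The Chernoff exponent for two random words to agree in at least `1 + δ` times the expected
number of places: the large-deviation rate `(1 + δ) * log (1 + δ) - δ` of a Poisson variable of
mean one, divided by `1 + δ` so that it counts per place of agreement. -/
noncomputable def agreementRate (δ : ℝ) : ℝ :=
  Real.log (1 + δ) - δ / (1 + δ)

section Rate

variable {δ : ℝ}

theorem agreementRate_pos (hδ : 0 < δ) : 0 < agreementRate δ := by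
  have hδ₁ : 0 < 1 + δ := by positivity
  have hlog : Real.log (1 + δ)⁻¹ < (1 + δ)⁻¹ - 1 :=
    Real.log_lt_sub_one_of_pos (inv_pos.2 hδ₁) (inv_lt_one_of_one_lt₀ (by linarith)).ne
  have hfrac : δ / (1 + δ) = 1 - (1 + δ)⁻¹ := by field_simp; ring
  rw [Real.log_inv] at hlog
  rw [agreementRate, hfrac]
  linarith

theorem exp_agreementRate_mul_le (hδ : 0 ≤ δ) {q : ℝ} (hq : 0 < q) {r s : ℕ}
    (h : (1 + δ) * r ≤ q * (r - s)) :
    Real.exp (agreementRate δ * (r - s)) * (1 + (q - 1) * (1 + δ)⁻¹) ^ r ≤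
      q ^ r * (1 + δ)⁻¹ ^ s := by
  have hδ₁ : 0 < 1 + δ := by positivity
  have hinv (n : ℕ) : (1 + δ)⁻¹ ^ n = Real.exp (-(n * Real.log (1 + δ))) := by
    rw [Real.exp_neg, Real.exp_nat_mul, Real.exp_log hδ₁, inv_pow]
  have hbase : 1 + (q - 1) * (1 + δ)⁻¹ = q * (1 + δ)⁻¹ * (δ / q + 1) := by field_simp; ring
  have hratio : r * (δ / q) ≤ δ / (1 + δ) * (r - s) := by
    rw [mul_div_assoc', div_mul_eq_mul_div, div_le_div_iff₀ hq hδ₁]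
    linarith [mul_le_mul_of_nonneg_left h hδ]
  have hpow : (δ / q + 1) ^ r ≤ Real.exp (δ / (1 + δ) * (r - s)) :=
    calc (δ / q + 1) ^ r ≤ Real.exp (δ / q) ^ r := by gcongr; exact Real.add_one_le_exp _
      _ = Real.exp (r * (δ / q)) := (Real.exp_nat_mul _ _).symm
      _ ≤ Real.exp (δ / (1 + δ) * (r - s)) := Real.exp_le_exp.2 hratio
  calc Real.exp (agreementRate δ * (r - s)) * (1 + (q - 1) * (1 + δ)⁻¹) ^ r
      = q ^ r * (Real.exp (agreementRate δ * (r - s)) * (1 + δ)⁻¹ ^ r * (δ / q + 1) ^ r) := by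
        rw [hbase, mul_pow, mul_pow]; ring
    _ ≤ q ^ r * (Real.exp (agreementRate δ * (r - s)) * (1 + δ)⁻¹ ^ r *
          Real.exp (δ / (1 + δ) * (r - s))) := by gcongr
    _ = q ^ r * (1 + δ)⁻¹ ^ s := by
        rw [hinv, hinv, ← Real.exp_add, ← Real.exp_add, agreementRate]
        congr 2
        ring

end Rate

theorem setRamsey_exponential_lower_bound (δ : ℝ) (hδ : 0 < δ) :
    ∃ c > (0 : ℝ), ∀ r s k : ℕ, s < r → 1 ≤ s →
      ((k : ℝ) - 1) * ((r : ℝ) - s) ≥ (1 + δ) * r →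
      (setRamsey r s k : ℝ) ≥ Real.exp (c * ((r : ℝ) - s)) := by
  refine ⟨agreementRate δ, agreementRate_pos hδ, fun r s k hsr hs hk => ?_⟩
  have hr : (0 : ℝ) < r := mod_cast (by omega : 0 < r)
  have hrs : (0 : ℝ) < r - s := sub_pos.2 (mod_cast hsr)
  have hk₁ : (0 : ℝ) < k - 1 := pos_of_mul_pos_left (lt_of_lt_of_le (by positivity) hk) hrs.le
  have hk₂ : 1 < k := by exact_mod_cast sub_pos.1 hk₁
  obtain ⟨q, rfl⟩ := Nat.exists_eq_add_one.2 (one_pos.trans hk₂)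
  rw [Nat.cast_add_one, add_sub_cancel_right] at hk hk₁
  obtain ⟨C, hC, hcard⟩ := exists_code_prod_card_mul_pow_le (ι := Fin r) (α := fun _ => Fin q)
    (z := (1 + δ)⁻¹) (by positivity) (inv_le_one_of_one_le₀ (by linarith)) (by omega : s ≠ 0)
  simp only [prod_const, card_univ, Fintype.card_fin] at hcard
  have hball : 0 < (1 + ((q : ℝ) - 1) * (1 + δ)⁻¹) ^ r := by
    have hq : (0 : ℝ) ≤ q - 1 := sub_nonneg.2 (mod_cast Nat.lt_add_one_iff.1 hk₂)
    positivity
  have hexp : Real.exp (agreementRate δ * (r - s)) ≤ #C :=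
    le_of_mul_le_mul_right ((exp_agreementRate_mul_le hδ.le hk₁ hk).trans hcard) hball
  have hlt : #C < setRamsey r s (q + 1) :=
    card_lt_setRamsey_of_le_hammingDist (by omega) (by omega) hC (by simp)
  exact hexp.trans (mod_cast hlt.le)
end

section
/- For all integers r > s ≥ 1 and every integer k ≥ 2 with k·(r − s) ≤ r, one has R_{r,s}(k) ≤ k². Equivalently, every colouring assigning to each edge of the complete graph on k² vertices a set of s colours from {1,…,r} contains a monochromatic clique of size k, provided k·(r−s) ≤ r. -/
/-!
The most common colour lies on at least a proportion `s / r ≥ 1 - 1 / k` of the `n.choose 2` edges,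
whereas Turán's theorem leaves a graph without `k`-clique at most `(1 - 1 / (k - 1)) * n ^ 2 / 2`
edges. Since `k * (k - 2) = (k - 1) ^ 2 - 1`, the first quantity exceeds the second as soon as
`n > (k - 1) ^ 2`.
-/

section

open Finset Fintype SimpleGraph

theorem mul_card_edgeFinset_le_of_cliqueFree {V : Type*} [Fintype V] {G : SimpleGraph V}
    [DecidableRel G.Adj] {m : ℕ} (hG : G.CliqueFree (m + 1)) :
    2 * m * #G.edgeFinset ≤ (m - 1) * card V ^ 2 :=
  calc 2 * m * #G.edgeFinset
      ≤ 2 * m * #(turanGraph (card V) m).edgeFinset :=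
        Nat.mul_le_mul_left _ (hG.card_edgeFinset_le.trans_eq card_edgeFinset_turanGraph.symm)
    _ ≤ (m - 1) * card V ^ 2 := mul_card_edgeFinset_turanGraph_le

/-- The graph of the pairs to which the set-colouring `χ` gives the colour `i`. Reading each pair in
both orders makes this a simple graph even when `χ` is not symmetric. -/
def colourGraph {V C : Type*} (χ : V → V → Finset C) (i : C) : SimpleGraph V :=
  fromRel fun u v ↦ i ∈ χ u v

theorem mul_choose_two_le_sum_card_edgeFinset_colourGraph {V C : Type*} [Fintype V] [Fintype C]
    {χ : V → V → Finset C} [∀ i, Fintype (colourGraph χ i).edgeSet] {s : ℕ}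
    (hcard : ∀ u v, u ≠ v → s ≤ #(χ u v)) :
    s * (card V).choose 2 ≤ ∑ i, #(colourGraph χ i).edgeFinset := by
  classical
  have hcolours : ∀ e ∈ (⊤ : SimpleGraph V).edgeFinset,
      s ≤ #{i | e ∈ (colourGraph χ i).edgeSet} := by
    refine Sym2.ind fun u v huv ↦ ?_
    have hne : u ≠ v := by simpa using huv
    refine (hcard u v hne).trans (card_le_card fun i hi ↦ ?_)
    simp [colourGraph, hne, hi]
  calc s * (card V).choose 2
      = #(⊤ : SimpleGraph V).edgeFinset • s := by
        rw [card_edgeFinset_top_eq_card_choose_two, smul_eq_mul, mul_comm]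
    _ ≤ ∑ e ∈ (⊤ : SimpleGraph V).edgeFinset, #{i | e ∈ (colourGraph χ i).edgeSet} :=
        card_nsmul_le_sum _ _ _ hcolours
    _ = ∑ i, #{e ∈ (⊤ : SimpleGraph V).edgeFinset | e ∈ (colourGraph χ i).edgeSet} :=
        sum_card_bipartiteAbove_eq_sum_card_bipartiteBelow _
    _ ≤ ∑ i, #(colourGraph χ i).edgeFinset :=
        sum_le_sum fun i _ ↦ card_le_card fun e he ↦ by simp_all

theorem exists_monochromatic_clique_of_lt_mul_choose_two {V C : Type*} [Fintype V] [Fintype C]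
    {χ : V → V → Finset C} {s m : ℕ} (hsymm : ∀ u v, χ u v = χ v u)
    (hcard : ∀ u v, u ≠ v → s ≤ #(χ u v))
    (hdense : card C * ((m - 1) * card V ^ 2) < 2 * m * (s * (card V).choose 2)) :
    ∃ (S : Finset V) (i : C), #S = m + 1 ∧ ∀ u ∈ S, ∀ v ∈ S, u ≠ v → i ∈ χ u v := by
  classical
  obtain ⟨i, -, hi⟩ : ∃ i ∈ univ,
      (m - 1) * card V ^ 2 < 2 * m * #(colourGraph χ i).edgeFinset := by
    apply exists_lt_of_sum_lt
    calc ∑ _i : C, (m - 1) * card V ^ 2 = card C * ((m - 1) * card V ^ 2) := by simp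
      _ < 2 * m * (s * (card V).choose 2) := hdense
      _ ≤ 2 * m * ∑ i, #(colourGraph χ i).edgeFinset := by
        gcongr
        exact mul_choose_two_le_sum_card_edgeFinset_colourGraph hcard
      _ = ∑ i, 2 * m * #(colourGraph χ i).edgeFinset := mul_sum ..
  have hclique : ¬ (colourGraph χ i).CliqueFree (m + 1) := fun hfree ↦
    hi.not_ge (mul_card_edgeFinset_le_of_cliqueFree hfree)
  obtain ⟨S, hS⟩ : ∃ S, (colourGraph χ i).IsNClique (m + 1) S := by
    simpa only [CliqueFree, not_forall, not_not] using hclique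
  refine ⟨S, i, hS.card_eq, fun u hu v hv huv ↦ ?_⟩
  simpa [colourGraph, huv, hsymm v u] using hS.isClique hu hv huv

end

theorem mul_pred_mul_sq_lt_two_mul_mul_choose_two {r s m n : ℕ} (hr : 0 < r) (hm : 0 < m)
    (hrs : m * r ≤ (m + 1) * s) (hn : m ^ 2 < n) :
    r * ((m - 1) * n ^ 2) < 2 * m * (s * n.choose 2) := by
  obtain ⟨l, rfl⟩ : ∃ l, m = l + 1 := ⟨m - 1, by omega⟩
  obtain ⟨t, rfl⟩ : ∃ t, n = t + 1 := ⟨n - 1, by omega⟩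
  have hchoose : 2 * (t + 1).choose 2 = (t + 1) * t := by
    rw [Nat.choose_two_right, Nat.mul_div_cancel' (Nat.even_mul_pred_self _).two_dvd,
      Nat.add_sub_cancel]
  have hlt : (l + 2) * l * (t + 1) < (l + 1) ^ 2 * t := by
    linarith
  refine Nat.lt_of_mul_lt_mul_left (a := l + 2) ?_
  calc (l + 2) * (r * ((l + 1 - 1) * (t + 1) ^ 2))
      = r * (t + 1) * ((l + 2) * l * (t + 1)) := by
        rw [Nat.add_sub_cancel]
        ring
    _ < r * (t + 1) * ((l + 1) ^ 2 * t) := by gcongr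
    _ = (l + 1) * (t + 1) * t * ((l + 1) * r) := by ring
    _ ≤ (l + 1) * (t + 1) * t * ((l + 2) * s) := by gcongr
    _ = (l + 2) * (l + 1) * s * ((t + 1) * t) := by ring
    _ = (l + 2) * (2 * (l + 1) * (s * (t + 1).choose 2)) := by
        rw [← hchoose]
        ring

theorem setRamsey_turan_range_general {r s k n : ℕ} (hr : 0 < r) (hk : 2 ≤ k)
    (hrs : (k - 1) * r ≤ k * s) (hn : (k - 1) ^ 2 < n) : HasSetColouringRamsey r s k n := by
  intro χ hsymm hcard
  obtain ⟨m, rfl⟩ : ∃ m, k = m + 1 := ⟨k - 1, by omega⟩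
  refine exists_monochromatic_clique_of_lt_mul_choose_two hsymm
    (fun u v huv ↦ (hcard u v huv).ge) ?_
  simpa using mul_pred_mul_sq_lt_two_mul_mul_choose_two hr (by omega) hrs hn

theorem setRamsey_turan_range (r s k : ℕ) (hsr : s < r) (hs : 1 ≤ s)
    (hk : 2 ≤ k) (hkrs : k * (r - s) ≤ r) :
    setRamsey r s k ≤ k ^ 2 := by
  have hrs : (k - 1) * r ≤ k * s := by
    rw [Nat.mul_sub] at hkrs
    rw [Nat.sub_one_mul]
    omega
  exact Nat.sInf_le (setRamsey_turan_range_general (by omega) hk hrs (by gcongr; omega))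
end
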